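/- (Embedding of standard Hermitian forms) Let ℓ/k be an extension of algebraically closed fields, let γ be an involution of k, and let d be a positive integer. Then there exists an involution γ̄ of ℓ extending γ such that the standard (γ̄,1)-Hermitian form on ℓ^d, given by ⟨x,y⟩ = Σ_{j=1}^{d} γ̄(x_j)·y_j, restricts on k^d ⊆ ℓ^d to the standard (γ,1)-Hermitian form ⟨x,y⟩ = Σ_{j=1}^{d} γ(x_j)·y_j. -/

import Mathlib

open Polynomial IntermediateField

theorem IsSumSq.map {R S : Type*} [Semiring R] [Semiring S] (f : R →+* S) {s : R}
    (hs : IsSumSq s) : IsSumSq (f s) := by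
  induction hs with
  | zero => simp
  | sq_add a _ ih => simpa using IsSumSq.sq_add (f a) ih

theorem IsSemireal.eq_zero_of_isSumSq_neg {F : Type*} [Field F] [IsSemireal F] {a : F}
    (ha : IsSumSq a) (hna : IsSumSq (-a)) : a = 0 := by
  by_contra h
  refine IsSemireal.not_isSumSq_neg_one F ?_
  have : (-1 : F) = -a * a * (a⁻¹ * a⁻¹) := by field_simp
  rw [this]
  exact (hna.mul ha).mul (.mul_self _)

theorem IsSumSq.even_natDegree_and_leadingCoeff {F : Type*} [Field F] [IsSemireal F] {P : F[X]}
    (hP : IsSumSq P) : Even P.natDegree ∧ IsSumSq P.leadingCoeff := by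
  induction hP with
  | zero => simp
  | @sq_add a s hs ih =>
    have hd : Even (a * a).natDegree := by rw [← sq, natDegree_pow]; exact even_two_mul _
    have hl : IsSumSq (a * a).leadingCoeff := by rw [leadingCoeff_mul]; exact .mul_self _
    rcases lt_trichotomy (a * a).degree s.degree with h | h | h
    · rw [natDegree_eq_of_degree_eq (degree_add_eq_right_of_degree_lt h),
        leadingCoeff_add_of_degree_lt h]
      exact ih
    · by_cases h0 : (a * a).leadingCoeff + s.leadingCoeff = 0
      · have hz : a * a = 0 := by
          rw [← leadingCoeff_eq_zero]
          refine IsSemireal.eq_zero_of_isSumSq_neg hl ?_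
          rw [neg_eq_of_add_eq_zero_right h0]
          exact ih.2
        simpa [hz] using ih
      · have hds := degree_add_eq_of_leadingCoeff_add_ne_zero h0
        rw [← h, max_self] at hds
        rw [natDegree_eq_of_degree_eq hds, leadingCoeff_add_of_degree_eq h h0]
        exact ⟨hd, hl.add ih.2⟩
    · rw [natDegree_eq_of_degree_eq (degree_add_eq_left_of_degree_lt h),
        leadingCoeff_add_of_degree_lt' h]
      exact ⟨hd, hl⟩

theorem Polynomial.eq_zero_of_isSumSq_neg {F : Type*} [Field F] [IsSemireal F] {P : F[X]}
    (hP : IsSumSq P) (hnP : IsSumSq (-P)) : P = 0 := by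
  rw [← leadingCoeff_eq_zero]
  refine IsSemireal.eq_zero_of_isSumSq_neg hP.even_natDegree_and_leadingCoeff.2 ?_
  rw [← leadingCoeff_neg]
  exact hnP.even_natDegree_and_leadingCoeff.2

theorem IsSumSq.exists_aeval_of_mem_adjoin_simple {F L : Type*} [Field F] [Field L] [Algebra F L]
    {α : L} {s : F⟮α⟯} (hs : IsSumSq s) :
    ∃ P Q : F[X], IsSumSq P ∧ aeval α Q ≠ 0 ∧ (s : L) * aeval α Q ^ 2 = aeval α P := by
  induction hs with
  | zero => exact ⟨0, 1, .zero, by simp, by simp⟩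
  | @sq_add a s hs ih =>
    obtain ⟨P, Q, hP, hQ, h⟩ := ih
    obtain ⟨u, v, huv⟩ := (mem_adjoin_simple_iff F _).1 a.2
    by_cases hv : aeval α v = 0
    · refine ⟨P, Q, hP, hQ, ?_⟩
      simpa [huv, hv] using h
    · refine ⟨(u * Q) * (u * Q) + v * v * P, v * Q, .sq_add _ ((IsSumSq.mul_self v).mul hP),
        by simp [hv, hQ], ?_⟩
      simp only [AddMemClass.coe_add, MulMemClass.coe_mul, huv, map_add, map_mul, ← h]
      field_simp

theorem Transcendental.isSemireal_adjoin_simple {F L : Type*} [Field F] [IsSemireal F] [Field L]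
    [Algebra F L] {α : L} (hα : Transcendental F α) : IsSemireal F⟮α⟯ := by
  refine .of_not_isSumSq_neg_one fun hs ↦ ?_
  obtain ⟨P, Q, hP, hQ, h⟩ := hs.exists_aeval_of_mem_adjoin_simple
  have hPQ : P = -(Q * Q) := by
    refine transcendental_iff_injective.1 hα ?_
    rw [← h]
    simp [sq]
  have hz : Q * Q = 0 := Polynomial.eq_zero_of_isSumSq_neg (.mul_self Q) (hPQ ▸ hP)
  exact hQ (by simp [mul_self_eq_zero.1 hz])

theorem IntermediateField.exists_natDegree_lt_aeval_eq {F L : Type*} [Field F] [Field L]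
    [Algebra F L] {α : L} {f : F[X]} (hf : 0 < f.natDegree) (hα : aeval α f = 0) {y : L}
    (hy : y ∈ F⟮α⟯) : ∃ p : F[X], p.natDegree < f.natDegree ∧ aeval α p = y := by
  have hf0 : f ≠ 0 := by rintro rfl; simp at hf
  have hint : IsAlgebraic F α := ⟨f, hf0, hα⟩
  rw [← mem_toSubalgebra, adjoin_simple_toSubalgebra_of_isAlgebraic hint,
    Algebra.adjoin_singleton_eq_range_aeval] at hy
  obtain ⟨p, rfl⟩ := hy
  refine ⟨p % f, natDegree_mod_lt p hf.ne', ?_⟩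
  have := congrArg (aeval α) (EuclideanDomain.mod_add_div p f)
  simpa [hα] using this

/-- Every element of `L` generating a semireal extension of `F` lies in `F`. -/
def IsMaximalSemireal (F L : Type*) [Field F] [Field L] [Algebra F L] : Prop :=
  ∀ α : L, IsSemireal F⟮α⟯ → α ∈ Set.range (algebraMap F L)

namespace IsMaximalSemireal

theorem isAlgebraic {F L : Type*} [Field F] [IsSemireal F] [Field L] [Algebra F L]
    (h : IsMaximalSemireal F L) : Algebra.IsAlgebraic F L := by
  refine ⟨fun α ↦ by_contra fun hα ↦ ?_⟩
  obtain ⟨a, rfl⟩ := h α (Transcendental.isSemireal_adjoin_simple hα)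
  exact hα (isAlgebraic_algebraMap a)

variable {F L : Type*} [Field F] [IsSemireal F] [Field L] [IsAlgClosed L] [Algebra F L]

theorem isSumSq_neg_of_not_isSquare (h : IsMaximalSemireal F L) {x : F} (hx : ¬ IsSquare x) :
    IsSumSq (-x) := by
  obtain ⟨β, hβ⟩ := IsAlgClosed.exists_pow_nat_eq (algebraMap F L x) two_pos
  have hβF : β ∉ Set.range (algebraMap F L) := by
    rintro ⟨b, rfl⟩
    exact hx ⟨b, (algebraMap F L).injective (by rw [map_mul, ← hβ, sq])⟩
  have hdeg : (X ^ 2 - C x : F[X]).natDegree = 2 := natDegree_X_pow_sub_C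
  have key {s : F⟮β⟯} (hs : IsSumSq s) : ∃ A C B : F, IsSumSq A ∧ IsSumSq C ∧
      (s : L) = algebraMap F L (A + x * C) + algebraMap F L B * β := by
    induction hs with
    | zero => exact ⟨0, 0, 0, .zero, .zero, by simp⟩
    | @sq_add a s hs ih =>
      obtain ⟨A, C, B, hA, hC, e⟩ := ih
      obtain ⟨p, hp, hpa⟩ := exists_natDegree_lt_aeval_eq (f := X ^ 2 - Polynomial.C x)
        (by simp [hdeg]) (by simp [hβ]) a.2
      obtain ⟨u, v, rfl⟩ := exists_eq_X_add_C_of_natDegree_le_one (p := p) (by omega)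
      refine ⟨v * v + A, u * u + C, 2 * u * v + B, .sq_add _ hA, .sq_add _ hC, ?_⟩
      simp only [AddMemClass.coe_add, MulMemClass.coe_mul, e, ← hpa]
      simp only [map_add, map_mul, aeval_X, aeval_C, map_ofNat]
      linear_combination (algebraMap F L u) ^ 2 * hβ
  have hs : IsSumSq (-1 : F⟮β⟯) := by
    by_contra hs
    exact hβF (h β (.of_not_isSumSq_neg_one hs))
  obtain ⟨A, C, B, hA, hC, e⟩ := key hs
  have hB : B = 0 := by
    by_contra hB
    refine hβF ⟨(-1 - (A + x * C)) / B, ?_⟩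
    have : algebraMap F L B ≠ 0 := by simpa using hB
    rw [map_div₀, div_eq_iff this, map_sub, map_neg, map_one]
    simp only [NegMemClass.coe_neg, OneMemClass.coe_one] at e
    linear_combination e
  have e' : -1 = A + x * C := (algebraMap F L).injective (by simpa [hB] using e)
  have hC0 : C ≠ 0 := by
    rintro rfl
    exact IsSemireal.not_isSumSq_neg_one F (by simpa [e'] using hA)
  have : -x = (1 + A) * C * (C⁻¹ * C⁻¹) := by
    field_simp
    linear_combination e'
  rw [this]
  exact ((IsSumSq.one.add hA).mul hC).mul (.mul_self _)

theorem isSquare_of_isSumSq (h : IsMaximalSemireal F L) {x : F} (hx : IsSumSq x) :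
    IsSquare x := by
  by_contra hs
  have := IsSemireal.eq_zero_of_isSumSq_neg hx (h.isSumSq_neg_of_not_isSquare hs)
  exact hs (this ▸ IsSquare.zero)

theorem isSquare_or_isSquare_neg (h : IsMaximalSemireal F L) (x : F) :
    IsSquare x ∨ IsSquare (-x) :=
  or_iff_not_imp_left.2 fun hx ↦ h.isSquare_of_isSumSq (h.isSumSq_neg_of_not_isSquare hx)

theorem exists_isRoot_of_odd_natDegree (h : IsMaximalSemireal F L) (f : F[X])
    (hf : Odd f.natDegree) : ∃ x, f.IsRoot x := by
  induction hn : f.natDegree using Nat.strong_induction_on generalizing f with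
  | _ n ih =>
  have hf0 : f ≠ 0 := by rintro rfl; simp at hf
  have hfu : ¬ IsUnit f := fun hu ↦ by simp [natDegree_eq_zero_of_isUnit hu] at hf
  by_cases hirr : Irreducible f
  · obtain ⟨α, hα⟩ := IsAlgClosed.exists_aeval_eq_zero L f (degree_pos_of_irreducible hirr).ne'
    by_cases hreal : IsSemireal F⟮α⟯
    · obtain ⟨a, rfl⟩ := h α hreal
      exact ⟨a, (algebraMap F L).injective (by simpa [aeval_algebraMap_apply] using hα)⟩
    have key {s : F⟮α⟯} (hs : IsSumSq s) :
        ∃ P : F[X], IsSumSq P ∧ P.natDegree ≤ 2 * (n - 1) ∧ aeval α P = s := by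
      induction hs with
      | zero => exact ⟨0, .zero, by simp, by simp⟩
      | @sq_add a s hs ih =>
        obtain ⟨P, hP, hd, e⟩ := ih
        obtain ⟨p, hp, hpa⟩ := exists_natDegree_lt_aeval_eq hf.pos hα a.2
        refine ⟨p * p + P, .sq_add _ hP, ?_, by simp [e, hpa]⟩
        refine natDegree_add_le_of_degree_le ?_ hd
        rw [← sq, natDegree_pow]
        omega
    rw [isSemireal_iff_not_isSumSq_neg_one, not_not] at hreal
    obtain ⟨P, hP, hd, e⟩ := key hreal
    have hP1 : IsSumSq (1 + P) := IsSumSq.one.add hP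
    have hP0 : 1 + P ≠ 0 := fun h0 ↦ one_ne_zero (α := F[X])
      (Polynomial.eq_zero_of_isSumSq_neg .one (by rwa [neg_eq_of_add_eq_zero_right h0]))
    have hdvd : f ∣ 1 + P :=
      (Dvd.intro _ (minpoly.eq_of_irreducible hirr hα)).trans (minpoly.dvd F α (by simp [e]))
    obtain ⟨g, hg⟩ := hdvd
    have hg0 : g ≠ 0 := by rintro rfl; simp [hg] at hP0
    have hdeg : (1 + P).natDegree = n + g.natDegree := by rw [hg, natDegree_mul hf0 hg0, hn]
    have hle : (1 + P).natDegree ≤ 2 * (n - 1) :=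
      natDegree_add_le_of_degree_le (by simp) hd
    have hev := hP1.even_natDegree_and_leadingCoeff.1
    obtain ⟨r, hr⟩ := ih g.natDegree (by grind) g (by grind) rfl
    have hPr : 1 + P.eval r = 0 := by
      have := congrArg (eval r) hg
      simpa [hr.eq_zero] using this
    exact absurd hPr (IsSemireal.one_add_ne_zero (hP.map (evalRingHom r)))
  · obtain ⟨a, b, rfl, ha, hb⟩ : ∃ a b, f = a * b ∧ ¬ IsUnit a ∧ ¬ IsUnit b := by
      rw [irreducible_iff] at hirr
      push Not at hirr
      obtain ⟨a, b, h⟩ := hirr hfu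
      exact ⟨a, b, h⟩
    have ha0 := left_ne_zero_of_mul hf0
    have hb0 := right_ne_zero_of_mul hf0
    rw [isUnit_iff_degree_eq_zero, degree_eq_natDegree ha0] at ha
    rw [isUnit_iff_degree_eq_zero, degree_eq_natDegree hb0] at hb
    rw [natDegree_mul ha0 hb0] at hf hn
    norm_cast at ha hb
    rcases Nat.even_or_odd a.natDegree with hae | hao
    · obtain ⟨r, hr⟩ := ih b.natDegree (by omega) b (by grind) rfl
      exact ⟨r, by simp [hr.eq_zero]⟩
    · obtain ⟨r, hr⟩ := ih a.natDegree (by omega) a hao rfl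
      exact ⟨r, by simp [hr.eq_zero]⟩

end IsMaximalSemireal

theorem finrank_eq_one_of_exists_isRoot_minpoly {F E : Type*} [Field F] [Field E] [Algebra F E]
    [FiniteDimensional F E] [Algebra.IsSeparable F E]
    (h : ∀ f : F[X], f.natDegree = Module.finrank F E → ∃ x, f.IsRoot x) :
    Module.finrank F E = 1 := by
  obtain ⟨α, hα⟩ := Field.exists_primitive_element F E
  rw [Field.primitive_element_iff_minpoly_natDegree_eq] at hα
  obtain ⟨x, hx⟩ := h _ hα
  rw [← hα]
  exact natDegree_eq_of_degree_eq_some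
    (degree_eq_one_of_irreducible_of_root (minpoly.irreducible (.of_finite F α)) hx)

theorem IsGalois.exists_finrank_eq_two_pow {F E : Type*} [Field F] [Field E] [Algebra F E]
    [FiniteDimensional F E] [IsGalois F E]
    (h : ∀ f : F[X], Odd f.natDegree → ∃ x, f.IsRoot x) : ∃ m, Module.finrank F E = 2 ^ m := by
  obtain ⟨P⟩ : Nonempty (Sylow 2 Gal(E/F)) := inferInstance
  obtain ⟨m, hm⟩ := IsPGroup.iff_card.1 P.2
  have hE : Module.finrank (fixedField (P : Subgroup Gal(E/F))) E = 2 ^ m := by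
    rw [finrank_fixedField_eq_card, ← hm]
  have hmul := Module.finrank_mul_finrank F (fixedField (P : Subgroup Gal(E/F))) E
  have hidx : Module.finrank F (fixedField (P : Subgroup Gal(E/F))) = P.index := by
    have := (P : Subgroup Gal(E/F)).card_mul_index
    rw [IsGalois.card_aut_eq_finrank, ← hmul, hE, hm, mul_comm] at this
    exact (Nat.eq_of_mul_eq_mul_right (by positivity) this).symm
  have hodd : Odd (Module.finrank F (fixedField (P : Subgroup Gal(E/F)))) := by
    rw [hidx, ← Nat.not_even_iff_odd, even_iff_two_dvd]
    exact P.not_dvd_index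
  refine ⟨m, ?_⟩
  rw [← hmul, hE, finrank_eq_one_of_exists_isRoot_minpoly fun f hf ↦ h f (hf ▸ hodd), one_mul]

theorem IsGalois.finrank_eq_one_of_forall_isSquare {K E : Type*} [Field K] [NeZero (2 : K)]
    [Field E] [Algebra K E] [FiniteDimensional K E] [IsGalois K E] (h : ∀ x : K, IsSquare x)
    {m : ℕ} (hm : Module.finrank K E = 2 ^ m) : Module.finrank K E = 1 := by
  cases m with
  | zero => simpa using hm
  | succ r =>
    obtain ⟨J, hJ⟩ := Sylow.exists_subgroup_card_pow_prime (G := Gal(E/K)) 2 (n := r)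
      (by rw [IsGalois.card_aut_eq_finrank, hm]; exact pow_dvd_pow _ r.le_succ)
    have hmul := Module.finrank_mul_finrank K (fixedField J) E
    rw [finrank_fixedField_eq_card, hJ, hm, pow_succ, mul_comm] at hmul
    have h2 : Module.finrank K (fixedField J) = 2 :=
      Nat.eq_of_mul_eq_mul_left (by positivity) hmul
    have h1 : Module.finrank K (fixedField J) = 1 := by
      refine finrank_eq_one_of_exists_isRoot_minpoly fun f hf ↦ ?_
      rw [h2] at hf
      obtain ⟨x, hx⟩ := exists_quadratic_eq_zero (a := f.coeff 2) (b := f.coeff 1) (c := f.coeff 0)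
        (by rw [← hf, coeff_natDegree, leadingCoeff_ne_zero]; rintro rfl; simp at hf) (h _)
      refine ⟨x, ?_⟩
      rw [IsRoot, eval_eq_sum_range, hf, ← hx]
      simp only [Finset.sum_range_succ, Finset.sum_range_zero]
      ring
    omega

theorem IntermediateField.eq_top_of_forall_isSquare {F L : Type*} [Field F] [CharZero F] [Field L]
    [Algebra F L] [IsAlgClosed L] [Algebra.IsAlgebraic F L] (K : IntermediateField F L)
    [FiniteDimensional F K]
    (hF : ∀ f : F[X], Odd f.natDegree → ∃ x, f.IsRoot x) (hK : ∀ x : K, IsSquare x) :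
    K = ⊤ := by
  refine eq_top_iff.2 fun x _ ↦ ?_
  have : FiniteDimensional F F⟮x⟯ :=
    adjoin.finiteDimensional (Algebra.IsAlgebraic.isAlgebraic x).isIntegral
  have : IsAlgClosure F L := ⟨inferInstance, inferInstance⟩
  have : Normal F L := IsAlgClosure.normal F L
  let E := normalClosure F (K ⊔ F⟮x⟯ : IntermediateField F L) L
  have hE : K ⊔ F⟮x⟯ ≤ E := le_normalClosure _
  have hKE : K ≤ E := le_sup_left.trans hE
  have hxE : x ∈ E := hE (le_sup_right (a := K) (mem_adjoin_simple_self F x))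
  have : IsGalois F E := ⟨⟩
  let : Algebra K E := (inclusion hKE).toAlgebra
  have : IsScalarTower F K E := .of_algebraMap_eq' rfl
  have : FiniteDimensional K E := .right F K E
  have : IsGalois K E := IsGalois.tower_top_of_isGalois F K E
  obtain ⟨m, hm⟩ := IsGalois.exists_finrank_eq_two_pow (E := E) hF
  obtain ⟨r, -, hr⟩ := (Nat.dvd_prime_pow Nat.prime_two).1
    (hm ▸ Dvd.intro_left _ (Module.finrank_mul_finrank F K E))
  have h1 := IsGalois.finrank_eq_one_of_forall_isSquare hK hr
  obtain ⟨y, hy⟩ := mem_bot.1 <| (bot_eq_top_iff_finrank_eq_one.2 h1).ge <|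
    mem_top (F := K) (x := (⟨x, hxE⟩ : E))
  have : (y : L) = x := congrArg Subtype.val hy
  exact this ▸ y.2

theorem exists_sub_eq_and_two_mul_eq {F : Type*} [Field F] [NeZero (2 : F)]
    (hadd : ∀ a b : F, IsSquare (a * a + b * b)) (hneg : ∀ a : F, IsSquare a ∨ IsSquare (-a))
    (a b : F) : ∃ x y : F, x * x - y * y = a ∧ 2 * x * y = b := by
  have h2 : (2 : F) ≠ 0 := two_ne_zero
  by_cases hb : b = 0
  · rcases hneg a with ⟨r, hr⟩ | ⟨r, hr⟩
    · exact ⟨r, 0, by simp [hr], by simp [hb]⟩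
    · exact ⟨0, r, by simp [← hr], by simp [hb]⟩
  have key {c x : F} (hc : a * a + b * b = c * c) (hx : (a + c) / 2 = x * x) :
      ∃ x y : F, x * x - y * y = a ∧ 2 * x * y = b := by
    have hx' : a + c = 2 * (x * x) := by rw [← hx]; field_simp
    have hx0 : x ≠ 0 := by
      rintro rfl
      have : b * b = 0 := by linear_combination hc + (a - c) * (-1) * hx'
      exact hb (mul_self_eq_zero.1 this)
    refine ⟨x, b / (2 * x), ?_, by field_simp⟩
    have hbb : b * b = 2 * (x * x) * (c - a) := by linear_combination hc + (c - a) * hx'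
    field_simp
    linear_combination -hbb - 2 * x ^ 2 * hx'
  obtain ⟨c, hc⟩ := hadd a b
  rcases hneg ((a + c) / 2) with ⟨x, hx⟩ | ⟨x, hx⟩
  · exact key hc hx
  · have hx' : -(a + c) = 2 * (x * x) := by rw [← hx]; field_simp
    have hx0 : x ≠ 0 := by
      rintro rfl
      have : b * b = 0 := by linear_combination hc + (a - c) * hx'
      exact hb (mul_self_eq_zero.1 this)
    refine key (c := -c) (x := b / (2 * x)) (by simpa using hc) ?_
    field_simp
    linear_combination -hc - (a - c) * hx'

theorem IntermediateField.exists_add_mul_of_mem_adjoin_simple {F L : Type*} [Field F]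
    [Field L] [Algebra F L] {i x : L} (hi : i * i = -1) (hx : x ∈ F⟮i⟯) :
    ∃ a b : F, x = algebraMap F L a + algebraMap F L b * i := by
  have hdeg : (X ^ 2 - C (-1) : F[X]).natDegree = 2 := natDegree_X_pow_sub_C
  obtain ⟨p, hp, rfl⟩ := exists_natDegree_lt_aeval_eq (f := X ^ 2 - C (-1 : F))
    (by rw [hdeg]; exact two_pos) (by simp [sq, hi]) hx
  obtain ⟨b, a, rfl⟩ := exists_eq_X_add_C_of_natDegree_le_one (p := p) (by omega)
  exact ⟨a, b, by simp [add_comm]⟩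

namespace IsMaximalSemireal

variable {F L : Type*} [Field F] [IsSemireal F] [Field L] [IsAlgClosed L] [Algebra F L]

theorem adjoin_simple_eq_top (h : IsMaximalSemireal F L) {i : L} (hi : i * i = -1) :
    F⟮i⟯ = ⊤ := by
  have := h.isAlgebraic
  have : FiniteDimensional F F⟮i⟯ :=
    adjoin.finiteDimensional (Algebra.IsAlgebraic.isAlgebraic i).isIntegral
  refine eq_top_of_forall_isSquare _ h.exists_isRoot_of_odd_natDegree fun z ↦ ?_
  obtain ⟨a, b, hab⟩ := exists_add_mul_of_mem_adjoin_simple hi z.2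
  obtain ⟨x, y, rfl, rfl⟩ := exists_sub_eq_and_two_mul_eq
    (fun a b ↦ h.isSquare_of_isSumSq ((IsSumSq.mul_self a).add (.mul_self b)))
    h.isSquare_or_isSquare_neg a b
  refine ⟨algebraMap F _ x + algebraMap F _ y * AdjoinSimple.gen F i, Subtype.ext ?_⟩
  rw [hab]
  simp only [MulMemClass.coe_mul, AddMemClass.coe_add, AdjoinSimple.coe_gen, map_sub, map_mul,
    map_ofNat, IntermediateField.coe_algebraMap_apply]
  linear_combination -(algebraMap F L y) ^ 2 * hi

theorem exists_conj (h : IsMaximalSemireal F L) :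
    ∃ σ : L ≃ₐ[F] L, (∀ x, σ (σ x) = x) ∧ ∀ i, i * i = -1 → σ i = -i := by
  have := h.isAlgebraic
  have : IsAlgClosure F L := ⟨inferInstance, inferInstance⟩
  have : Normal F L := IsAlgClosure.normal F L
  obtain ⟨i, hi⟩ := IsAlgClosed.exists_pow_nat_eq (-1 : L) two_pos
  rw [sq] at hi
  have htop := h.adjoin_simple_eq_top hi
  have : FiniteDimensional F F⟮i⟯ :=
    adjoin.finiteDimensional (Algebra.IsAlgebraic.isAlgebraic i).isIntegral
  have : FiniteDimensional F L := by
    rw [htop] at this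
    exact topEquiv.toLinearEquiv.finiteDimensional
  have : IsGalois F L := ⟨⟩
  have hbot : i ∉ (⊥ : IntermediateField F L) := by
    rintro hmem
    obtain ⟨a, rfl⟩ := mem_bot.1 hmem
    refine IsSemireal.not_isSumSq_neg_one F ?_
    have ha : a * a = -1 := (algebraMap F L).injective (by simpa using hi)
    rw [← ha]
    exact .mul_self a
  rw [IsGalois.mem_bot_iff_fixed] at hbot
  push Not at hbot
  obtain ⟨σ, hσ⟩ := hbot
  have hσi : σ i = -i := by
    refine (mul_self_eq_mul_self_iff.1 ?_).resolve_left hσ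
    rw [← map_mul, hi, map_neg, map_one]
  refine ⟨σ, fun x ↦ ?_, fun j hj ↦ ?_⟩
  · obtain ⟨a, b, rfl⟩ := exists_add_mul_of_mem_adjoin_simple (F := F) (x := x) hi (htop ▸ mem_top)
    simp [hσi]
  · rcases mul_self_eq_mul_self_iff.1 (hj.trans hi.symm) with rfl | rfl <;> simp [hσi]

end IsMaximalSemireal

theorem Subfield.exists_le_isMaximalSemireal {L : Type*} [Field L] (F₀ : Subfield L)
    [IsSemireal F₀] : ∃ F : Subfield L, F₀ ≤ F ∧ IsSemireal F ∧ IsMaximalSemireal F L := by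
  obtain ⟨F, hF, hmax⟩ := zorn_le_nonempty₀ {F : Subfield L | IsSemireal F}
      (fun c hc hchain F₁ hF₁ ↦ by
    have hmem {x : L} : x ∈ sSup c ↔ ∃ F ∈ c, x ∈ F :=
      Subfield.mem_sSup_of_directedOn ⟨F₁, hF₁⟩ hchain.directedOn
    have key {s : ↥(sSup c)} (hs : IsSumSq s) : ∃ F ∈ c, ∃ t : F, IsSumSq t ∧ (t : L) = s := by
      induction hs with
      | zero => exact ⟨F₁, hF₁, 0, .zero, rfl⟩
      | sq_add a _ ih =>
        obtain ⟨F, hF, t, ht, hts⟩ := ih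
        obtain ⟨F', hF', ha⟩ := hmem.1 a.2
        obtain ⟨M, hM, hFM, hFM'⟩ := hchain.directedOn F hF F' hF'
        exact ⟨M, hM, ⟨a, hFM' ha⟩ * ⟨a, hFM' ha⟩ + Subfield.inclusion hFM t,
          .sq_add _ (ht.map _), by simp [← hts, Subfield.inclusion]⟩
    refine ⟨sSup c, .of_not_isSumSq_neg_one fun hs ↦ ?_, fun F hF ↦ le_sSup hF⟩
    obtain ⟨F, hF, t, ht, hts⟩ := key hs
    have : IsSemireal F := hc hF
    have ht1 : t = -1 := Subtype.ext hts
    exact IsSemireal.not_isSumSq_neg_one F (ht1 ▸ ht)) F₀ ‹_›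
  refine ⟨F, hF, hmax.prop, fun α hα ↦ ?_⟩
  have hs : IsSemireal F⟮α⟯.toSubfield := hα
  have hle : F ≤ F⟮α⟯.toSubfield := fun x hx ↦ F⟮α⟯.algebraMap_mem ⟨x, hx⟩
  exact ⟨⟨α, hmax.le_of_ge hs hle (mem_adjoin_simple_self F α)⟩, rfl⟩

theorem RingEquiv.exists_mul_self_eq_neg_one {k : Type*} [Field k] [IsAlgClosed k] {γ : k ≃+* k}
    (hinv : ∀ x, γ (γ x) = x) (hne : γ ≠ RingEquiv.refl k) :
    (2 : k) ≠ 0 ∧ ∃ j, j * j = -1 ∧ γ j = -j := by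
  obtain ⟨u, hu⟩ : ∃ u, γ u ≠ u := by
    by_contra! h
    exact hne (RingEquiv.ext h)
  have h2 : (2 : k) ≠ 0 := by
    intro h2
    have : CharP k 2 := CharTwo.of_one_ne_zero_of_two_eq_zero one_ne_zero h2
    have hd : u + γ u ≠ 0 := fun h0 ↦ hu (CharTwo.add_eq_zero.1 h0).symm
    obtain ⟨α, hα⟩ : ∃ α, γ α = α + 1 := by
      refine ⟨u / (u + γ u), ?_⟩
      rw [map_div₀, map_add, hinv, add_comm (γ u)]
      field_simp
      linear_combination -u * h2
    obtain ⟨β, hβ⟩ := IsAlgClosed.exists_root (X ^ 2 + X + C ((α ^ 2 + α) * α)) (by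
      rw [show (X ^ 2 + X + C ((α ^ 2 + α) * α) : k[X]).degree = 2 by compute_degree!]
      exact two_ne_zero)
    simp only [IsRoot, eval_add, eval_pow, eval_X, eval_C] at hβ
    have hγβ := congrArg γ hβ
    simp only [map_add, map_mul, map_pow, map_zero, hα] at hγβ
    have ht : (β + γ β + α) * (β + γ β + α + 1) = 0 := by
      linear_combination hβ + hγβ +
        (β * γ β + β * α + γ β * α - α ^ 3 - 2 * α - 2 * α ^ 2 - 1) * h2
    have hfix : γ (β + γ β) = β + γ β := by rw [map_add, hinv, add_comm]
    rcases mul_eq_zero.1 ht with h | h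
    · have := congrArg γ h
      rw [map_add, map_zero, hfix, hα] at this
      exact one_ne_zero (by linear_combination this - h)
    · have := congrArg γ h
      rw [map_add, map_add, map_zero, map_one, hfix, hα] at this
      exact one_ne_zero (by linear_combination this - h)
  refine ⟨h2, ?_⟩
  obtain ⟨w, hw⟩ := IsAlgClosed.exists_pow_nat_eq (u - γ u) two_pos
  have hd : u - γ u ≠ 0 := sub_ne_zero.2 hu.symm
  have hγw : γ w ^ 2 = -(u - γ u) := by rw [← map_pow, hw, map_sub, hinv, neg_sub]
  refine ⟨w * γ w / (u - γ u), ?_, ?_⟩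
  · field_simp
    linear_combination γ w ^ 2 * hw + (u - γ u) * hγw
  · rw [map_div₀, map_mul, map_sub, hinv, hinv, ← neg_sub u, div_neg, mul_comm]

theorem RingEquiv.isSemireal_map_fixed {k L : Type*} [Field k] [Field L] [Algebra k L]
    [IsAlgClosed k] {γ : k ≃+* k} (hinv : ∀ x, γ (γ x) = x) {j : k} (h2 : (2 : k) ≠ 0)
    (hj : j * j = -1) (hγj : γ j = -j) :
    IsSemireal ((γ.toRingHom.eqLocusField (RingHom.id k)).map (algebraMap k L)) := by
  refine .of_not_isSumSq_neg_one fun hs ↦ ?_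
  have key {s : (γ.toRingHom.eqLocusField (RingHom.id k)).map (algebraMap k L)}
      (hs : IsSumSq s) : ∃ t : k, γ t = t ∧ (s : L) = algebraMap k L (t * t) := by
    induction hs with
    | zero => exact ⟨0, map_zero γ, by simp⟩
    | sq_add a _ ih =>
      obtain ⟨t, ht, hst⟩ := ih
      obtain ⟨a, u, hu, rfl⟩ := a
      obtain ⟨z, hz⟩ := IsAlgClosed.exists_pow_nat_eq (u + t * j) two_pos
      have hγu : γ u = u := hu
      have hγz : γ z ^ 2 = u - t * j := by
        rw [← map_pow, hz, map_add, map_mul, hγu, ht, hγj, mul_neg, sub_eq_add_neg]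
      refine ⟨z * γ z, by rw [map_mul, hinv, mul_comm], ?_⟩
      have : z * γ z * (z * γ z) = u * u + t * t := by
        linear_combination γ z ^ 2 * hz + (u + t * j) * hγz - t ^ 2 * hj
      rw [this, map_add, ← hst, map_mul]
      rfl
  obtain ⟨t, ht, hst⟩ := key hs
  have htj : t * t = j * j := by
    rw [hj]
    refine (algebraMap k L).injective (hst.symm.trans ?_)
    rw [map_neg, map_one]
    rfl
  have hj0 : j ≠ 0 := by rintro rfl; simp at hj
  rcases mul_self_eq_mul_self_iff.1 htj with rfl | rfl
  · exact mul_ne_zero h2 hj0 (by linear_combination hγj - ht)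
  · rw [map_neg, hγj] at ht
    exact mul_ne_zero h2 hj0 (by linear_combination ht)

theorem RingEquiv.exists_involutive_extension {k L : Type*} [Field k] [Field L] [Algebra k L]
    [IsAlgClosed k] [IsAlgClosed L] {γ : k ≃+* k} (hinv : ∀ x, γ (γ x) = x)
    (hne : γ ≠ RingEquiv.refl k) :
    ∃ σ : L ≃+* L, (∀ x, σ (σ x) = x) ∧ ∀ a, σ (algebraMap k L a) = algebraMap k L (γ a) := by
  obtain ⟨h2, j, hj, hγj⟩ := exists_mul_self_eq_neg_one hinv hne
  have := isSemireal_map_fixed (L := L) hinv h2 hj hγj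
  obtain ⟨F, hle, hF, hmax⟩ := Subfield.exists_le_isMaximalSemireal
    ((γ.toRingHom.eqLocusField (RingHom.id k)).map (algebraMap k L))
  obtain ⟨σ, hσ, hσi⟩ := hmax.exists_conj
  have hfix {u : k} (hu : γ u = u) : σ (algebraMap k L u) = algebraMap k L u :=
    σ.commutes ⟨algebraMap k L u, hle ⟨u, hu, rfl⟩⟩
  have hσj : σ (algebraMap k L j) = -algebraMap k L j := hσi _ (by rw [← map_mul, hj]; simp)
  have hj0 : j ≠ 0 := by rintro rfl; simp at hj
  refine ⟨σ.toRingEquiv, hσ, fun a ↦ ?_⟩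
  obtain ⟨u, v, hu, hv, rfl⟩ : ∃ u v, γ u = u ∧ γ v = v ∧ u + v * j = a := by
    refine ⟨(a + γ a) / 2, (a - γ a) / (2 * j), ?_, ?_, by field_simp; ring⟩
    · rw [map_div₀, map_add, hinv, map_ofNat, add_comm]
    · rw [map_div₀, map_sub, hinv, map_mul, hγj, map_ofNat, mul_neg, div_neg, ← neg_div, neg_sub]
  simp [hfix hu, hfix hv, hσj, hu, hv, hγj]

theorem stmt_5 (k ℓ : Type*) [Field k] [Field ℓ] [Algebra k ℓ]
    [IsAlgClosed k] [IsAlgClosed ℓ]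
    (γ : k ≃+* k) (hinv : ∀ x, γ (γ x) = x) (hne : γ ≠ RingEquiv.refl k)
    (d : ℕ) (hd : 0 < d) :
    ∃ γbar : ℓ ≃+* ℓ, (∀ x, γbar (γbar x) = x) ∧ γbar ≠ RingEquiv.refl ℓ ∧
      (∀ a : k, γbar (algebraMap k ℓ a) = algebraMap k ℓ (γ a)) ∧
      ∀ x y : Fin d → k,
        (∑ j, γbar (algebraMap k ℓ (x j)) * algebraMap k ℓ (y j))
          = algebraMap k ℓ (∑ j, γ (x j) * y j) := by
  obtain ⟨σ, hσ, hext⟩ := RingEquiv.exists_involutive_extension (L := ℓ) hinv hne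
  refine ⟨σ, hσ, ?_, hext, fun x y ↦ by simp [hext]⟩
  rintro rfl
  exact hne (RingEquiv.ext fun a ↦ (algebraMap k ℓ).injective (hext a).symm)
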